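/- The series identity ∑_{n≥1} (−1/4)^n · (1)_n / ((1/2)_n) · [ (10n−3) H_n / (3 n² (2n−1)) − 4(3n−1)/(3 n² (2n−1)²) ] = ζ(3)/5 holds, where ζ is the Riemann zeta function. -/

import Mathlib

/-- The rising factorial (Pochhammer symbol) `(a)ₙ = a(a+1)⋯(a+n-1)`. -/
noncomputable def risingFactorial (a : ℝ) (n : ℕ) : ℝ :=
  ∏ i ∈ Finset.range n, (a + i)

/-- The generalized harmonic number `H_n^{(s)} = ∑_{k=1}^n 1/k^s`. -/
noncomputable def genHarmonic (s n : ℕ) : ℝ :=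
  ∑ k ∈ Finset.range n, 1 / ((k : ℝ) + 1) ^ s

/-!
The series comes from two Wilf–Zeilberger pairs `(F, G)` built on the weight
`w(n, k) = (-1)ⁿ k! n!² / (2n + k + 1)!`, for which `w(0, k) = 1 / (k + 1)`. Summing the relation
`F(n + 1, k) - F(n, k) = G(n, k + 1) - G(n, k)` over a growing square and letting the two far sides
tend to zero gives `∑ₙ G(n, 0) = ∑ₖ F(0, k)`.

* `F(n, k) = w(n, k) / (n + k + 1)²` turns `∑ 1 / (k + 1)³ = ζ(3)` into Apéry's series
  `(5/2) ∑ (-1)ⁿ⁻¹ / (n³ C(2n, n))`.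
* `F(n, k) = w(n, k) (Hₖ - Hₙ) / (n + k + 1)` turns Euler's sum `∑ Hₖ / (k + 1)² = ζ(3)` into a
  series whose terms contain `(10n - 3) Hₙ₋₁`.

The claim is `2/3` times the second identity minus `7/15` times the first: `2/3 - 7/15 = 1/5`.
-/

open Filter Topology Finset

/-! ### Wilf–Zeilberger pairs -/

section Boundary

variable {E : Type*} [NormedAddCommGroup E] {f : ℕ → ℕ → E} {a b : ℕ → ℝ}

lemma tendsto_sum_range_row_of_le_mul (hf : ∀ n k, ‖f n k‖ ≤ a n * b k)
    (ha : Tendsto (fun n : ℕ ↦ n * a n) atTop (𝓝 0)) (hb : Tendsto b atTop (𝓝 0)) :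
    Tendsto (fun N ↦ ∑ k ∈ range N, f N k) atTop (𝓝 0) := by
  have hlim := ha.mul hb.cesaro
  rw [mul_zero] at hlim
  refine squeeze_zero_norm (fun N ↦ ?_) hlim
  calc ‖∑ k ∈ range N, f N k‖ ≤ ∑ k ∈ range N, a N * b k :=
        norm_sum_le_of_le _ fun k _ ↦ hf N k
    _ = N * a N * ((N : ℝ)⁻¹ * ∑ k ∈ range N, b k) := by
        rw [← mul_sum]
        rcases eq_or_ne N 0 with rfl | hN
        · simp
        · field_simp

lemma tendsto_sum_range_column_of_le_mul (hf : ∀ n k, ‖f n k‖ ≤ a n * b k) (ha : Summable a)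
    (hb : Tendsto b atTop (𝓝 0)) :
    Tendsto (fun N ↦ ∑ n ∈ range N, f n N) atTop (𝓝 0) := by
  have hlim := ha.hasSum.tendsto_sum_nat.mul hb
  rw [mul_zero] at hlim
  refine squeeze_zero_norm (fun N ↦ ?_) hlim
  rw [sum_mul]
  exact norm_sum_le_of_le _ fun n _ ↦ hf n N

end Boundary

/-- The Wilf–Zeilberger relation between two functions of two discrete variables: the difference of
`F` in the first variable is the difference of `G` in the second. -/
def IsWZPair {E : Type*} [AddCommGroup E] (F G : ℕ → ℕ → E) : Prop :=
  ∀ n k, F (n + 1) k - F n k = G n (k + 1) - G n k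

namespace IsWZPair

lemma sum_range_zero_right {E : Type*} [AddCommGroup E] {F G : ℕ → ℕ → E} (h : IsWZPair F G)
    (N K : ℕ) :
    ∑ n ∈ range N, G n 0 =
      ∑ k ∈ range K, F 0 k - ∑ k ∈ range K, F N k + ∑ n ∈ range N, G n K := by
  have hF : ∑ n ∈ range N, ∑ k ∈ range K, (F (n + 1) k - F n k) =
      ∑ k ∈ range K, F N k - ∑ k ∈ range K, F 0 k := by
    rw [sum_comm, ← sum_sub_distrib]
    exact sum_congr rfl fun k _ ↦ sum_range_sub (F · k) N
  have hG : ∑ n ∈ range N, ∑ k ∈ range K, (G n (k + 1) - G n k) =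
      ∑ n ∈ range N, G n K - ∑ n ∈ range N, G n 0 := by
    rw [← sum_sub_distrib]
    exact sum_congr rfl fun n _ ↦ sum_range_sub (G n) K
  simp_rw [h _ _, hG] at hF
  rw [← neg_sub (∑ k ∈ range K, F N k), ← hF]
  abel

theorem hasSum_zero_right {E : Type*} [NormedAddCommGroup E] [CompleteSpace E] {F G : ℕ → ℕ → E}
    {a b : ℕ → ℝ} {s : E} (h : IsWZPair F G)
    (hF : ∀ n k, ‖F n k‖ ≤ a n * b k) (hG : ∀ n k, ‖G n k‖ ≤ a n * b k) (ha : Summable a)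
    (ha' : Tendsto (fun n : ℕ ↦ n * a n) atTop (𝓝 0)) (hb : Tendsto b atTop (𝓝 0))
    (hs : HasSum (F 0) s) : HasSum (fun n ↦ G n 0) s := by
  have hsum : Summable fun n ↦ G n 0 := .of_norm_bounded (ha.mul_right (b 0)) fun n ↦ hG n 0
  rw [hsum.hasSum_iff_tendsto_nat]
  have hlim := (hs.tendsto_sum_nat.sub (tendsto_sum_range_row_of_le_mul hF ha' hb)).add
    (tendsto_sum_range_column_of_le_mul hG ha hb)
  rw [sub_zero, add_zero] at hlim
  exact hlim.congr fun N ↦ (h.sum_range_zero_right N N).symm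

end IsWZPair

/-! ### Harmonic numbers -/

lemma genHarmonic_zero (s : ℕ) : genHarmonic s 0 = 0 := by simp [genHarmonic]

lemma genHarmonic_succ (s n : ℕ) :
    genHarmonic s (n + 1) = genHarmonic s n + 1 / ((n : ℝ) + 1) ^ s := by
  simp [genHarmonic, sum_range_succ]

lemma genHarmonic_one_succ (n : ℕ) :
    genHarmonic 1 (n + 1) = genHarmonic 1 n + 1 / ((n : ℝ) + 1) := by
  rw [genHarmonic_succ, pow_one]

lemma genHarmonic_nonneg (s n : ℕ) : 0 ≤ genHarmonic s n :=
  sum_nonneg fun _ _ ↦ by positivity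

lemma genHarmonic_le_natCast (s n : ℕ) : genHarmonic s n ≤ n := by
  have hterm (k : ℕ) : 1 / ((k : ℝ) + 1) ^ s ≤ 1 :=
    div_le_self zero_le_one (one_le_pow₀ (le_add_of_nonneg_left k.cast_nonneg))
  simpa [genHarmonic] using sum_le_card_nsmul (range n) _ 1 fun k _ ↦ hterm k

lemma abs_genHarmonic_sub_le (s n k : ℕ) :
    |genHarmonic s k - genHarmonic s n| ≤ genHarmonic s k + n := by
  have hk := genHarmonic_nonneg s k
  have hn := genHarmonic_nonneg s n
  have hn' := genHarmonic_le_natCast s n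
  exact abs_le.2 ⟨by linarith, by linarith⟩

lemma tendsto_genHarmonic_one_add_one_div :
    Tendsto (fun n : ℕ ↦ (genHarmonic 1 n + 1) / ((n : ℝ) + 1)) atTop (𝓝 0) := by
  have hinv := tendsto_one_div_add_atTop_nhds_zero_nat (𝕜 := ℝ)
  have hcesaro : Tendsto (fun n : ℕ ↦ (n : ℝ)⁻¹ * genHarmonic 1 n + 1 / ((n : ℝ) + 1)) atTop
      (𝓝 0) := by
    simpa [genHarmonic] using hinv.cesaro.add hinv
  refine squeeze_zero' (.of_forall fun n ↦ ?_) ?_ hcesaro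
  · have := genHarmonic_nonneg 1 n
    positivity
  · filter_upwards [eventually_gt_atTop 0] with n hn
    have := genHarmonic_nonneg 1 n
    rw [add_div, inv_mul_eq_div]
    gcongr
    linarith

/-! ### Euler's sum -/

lemma hasSum_sub_add_of_antitone {u : ℕ → ℝ} (hu : Antitone u) (hlim : Tendsto u atTop (𝓝 0))
    (N : ℕ) : HasSum (fun k ↦ u k - u (k + N)) (∑ i ∈ range N, u i) := by
  rw [hasSum_iff_tendsto_nat_of_nonneg fun k ↦ sub_nonneg.2 (hu (k.le_add_right N))]
  have hpartial (K : ℕ) : ∑ k ∈ range K, (u k - u (k + N)) =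
      ∑ i ∈ range N, u i - ∑ i ∈ range N, u (K + i) := by
    have hcomm := (sum_range_add u K N).symm.trans (K.add_comm N ▸ sum_range_add u N K)
    simp_rw [sum_sub_distrib, add_comm _ N]
    linarith
  simp_rw [hpartial]
  have htail : Tendsto (fun K ↦ ∑ i ∈ range N, u (K + i)) atTop (𝓝 0) := by
    simpa using tendsto_finsetSum (range N) fun i _ ↦ hlim.comp (tendsto_add_atTop_nat i)
  simpa using htail.const_sub (∑ i ∈ range N, u i)

lemma hasSum_one_div_sub_one_div_add (N : ℕ) :
    HasSum (fun k : ℕ ↦ 1 / ((k : ℝ) + 1) - 1 / ((k : ℝ) + N + 1)) (genHarmonic 1 N) := by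
  have hanti : Antitone fun k : ℕ ↦ 1 / ((k : ℝ) + 1) := fun m n hmn ↦ by
    dsimp only
    gcongr
  simpa [genHarmonic] using
    hasSum_sub_add_of_antitone hanti tendsto_one_div_add_atTop_nhds_zero_nat N

/-- The real number `ζ(3)`. -/
noncomputable def zetaThree : ℝ := ∑' n : ℕ, 1 / ((n : ℝ) + 1) ^ 3

lemma hasSum_zetaThree : HasSum (fun n : ℕ ↦ 1 / ((n : ℝ) + 1) ^ 3) zetaThree := by
  have h := (summable_nat_add_iff 1).2 (Real.summable_one_div_nat_pow.2 (show 1 < 3 by norm_num))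
  push_cast at h
  exact h.hasSum

lemma riemannZeta_three : riemannZeta 3 = (zetaThree : ℂ) := by
  rw [zeta_eq_tsum_one_div_nat_add_one_cpow (by norm_num), zetaThree, Complex.ofReal_tsum]
  refine tsum_congr fun n ↦ ?_
  push_cast
  norm_cast

/-- The general term of the Tornheim double series `∑ 1 / (m n (m + n))`, over `m, n ≥ 1`. -/
noncomputable def tornheimTerm (p : ℕ × ℕ) : ℝ :=
  1 / (((p.1 : ℝ) + 1) * ((p.2 : ℝ) + 1) * ((p.1 : ℝ) + p.2 + 2))

/-- The general term of the double zeta value `ζ(2, 1) = ∑ 1 / (m (m + n)²)`, over `m, n ≥ 1`. -/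
noncomputable def doubleZetaTerm (p : ℕ × ℕ) : ℝ :=
  1 / (((p.1 : ℝ) + 1) * ((p.1 : ℝ) + p.2 + 2) ^ 2)

lemma doubleZetaTerm_nonneg (p : ℕ × ℕ) : 0 ≤ doubleZetaTerm p := by
  unfold doubleZetaTerm
  positivity

lemma tornheimTerm_eq_add_swap (p : ℕ × ℕ) :
    tornheimTerm p = doubleZetaTerm p + doubleZetaTerm p.swap := by
  simp only [tornheimTerm, doubleZetaTerm, Prod.fst_swap, Prod.snd_swap]
  field_simp
  ring

lemma sqrt_mul_sqrt_le_add {x y : ℝ} (hx : 0 ≤ x) (hy : 0 ≤ y) : √x * √y ≤ x + y := by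
  nlinarith [Real.sq_sqrt hx, Real.sq_sqrt hy, sq_nonneg (√x - √y), Real.sqrt_nonneg x,
    Real.sqrt_nonneg y]

lemma summable_one_div_mul_sqrt :
    Summable fun n : ℕ ↦ 1 / (((n : ℝ) + 1) * √((n : ℝ) + 1)) := by
  have h := (summable_nat_add_iff 1).2
    (Real.summable_one_div_nat_rpow.2 (show (1 : ℝ) < 3 / 2 by norm_num))
  refine h.congr fun n ↦ ?_
  rw [Real.sqrt_eq_rpow, ← Real.rpow_one_add' (by positivity) (by norm_num)]
  norm_num

lemma summable_tornheimTerm : Summable tornheimTerm := by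
  have hs := summable_one_div_mul_sqrt
  refine (hs.mul_of_nonneg hs (fun _ ↦ by positivity) fun _ ↦ by positivity).of_nonneg_of_le
    (fun _ ↦ by unfold tornheimTerm; positivity) fun ⟨m, n⟩ ↦ ?_
  have hsqrt : √((m : ℝ) + 1) * √((n : ℝ) + 1) ≤ (m : ℝ) + n + 2 :=
    (sqrt_mul_sqrt_le_add (by positivity) (by positivity)).trans_eq (by ring)
  rw [tornheimTerm, div_mul_div_comm, one_mul, mul_mul_mul_comm]
  gcongr

lemma summable_doubleZetaTerm : Summable doubleZetaTerm :=
  summable_tornheimTerm.of_nonneg_of_le doubleZetaTerm_nonneg fun p ↦ by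
    rw [tornheimTerm_eq_add_swap]
    exact le_add_of_nonneg_right (doubleZetaTerm_nonneg _)

lemma tsum_tornheimTerm : ∑' p, tornheimTerm p = 2 * ∑' p, doubleZetaTerm p := by
  have hd := summable_doubleZetaTerm.hasSum
  have hswap : HasSum (fun p : ℕ × ℕ ↦ doubleZetaTerm p.swap) (∑' p, doubleZetaTerm p) :=
    (Equiv.prodComm ℕ ℕ).hasSum_iff.2 hd
  rw [two_mul]
  exact ((hd.add hswap).congr_fun tornheimTerm_eq_add_swap).tsum_eq

lemma hasSum_tornheimTerm_row (m : ℕ) :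
    HasSum (fun n ↦ tornheimTerm (m, n)) (genHarmonic 1 (m + 1) / ((m : ℝ) + 1) ^ 2) := by
  refine ((hasSum_one_div_sub_one_div_add (m + 1)).div_const _).congr_fun fun n ↦ ?_
  rw [tornheimTerm]
  push_cast
  field_simp
  ring

lemma sum_antidiagonal_doubleZetaTerm (m : ℕ) :
    ∑ p ∈ antidiagonal m, doubleZetaTerm p = genHarmonic 1 (m + 1) / ((m : ℝ) + 2) ^ 2 := by
  rw [genHarmonic, sum_div, Nat.sum_antidiagonal_eq_sum_range_succ_mk]
  refine sum_congr rfl fun i hi ↦ ?_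
  have hadd : (i : ℝ) + (m - i : ℕ) = m := by
    exact_mod_cast Nat.add_sub_of_le (mem_range_succ_iff.1 hi)
  rw [doubleZetaTerm, hadd, pow_one, div_div]

lemma hasSum_genHarmonic_div_sq_tsum_doubleZetaTerm :
    HasSum (fun k : ℕ ↦ genHarmonic 1 k / ((k : ℝ) + 1) ^ 2) (∑' p, doubleZetaTerm p) := by
  have hdiag (m : ℕ) : HasSum (fun p : antidiagonal m ↦ doubleZetaTerm p)
      (genHarmonic 1 (m + 1) / (((m + 1 : ℕ) : ℝ) + 1) ^ 2) := by
    convert hasSum_fintype _ using 1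
    rw [sum_coe_sort (antidiagonal m) doubleZetaTerm, sum_antidiagonal_doubleZetaTerm]
    push_cast
    ring
  rw [← hasSum_nat_add_iff' 1]
  simpa [genHarmonic_zero] using
    (HasAntidiagonal.sigmaAntidiagonalEquivProd.hasSum_iff.2 summable_doubleZetaTerm.hasSum).sigma
      hdiag

-- The Tornheim series equals `2 ζ(2, 1)` by symmetry and `ζ(2, 1) + ζ(3)` by rows.
theorem hasSum_genHarmonic_div_sq :
    HasSum (fun k : ℕ ↦ genHarmonic 1 k / ((k : ℝ) + 1) ^ 2) zetaThree := by
  have hdouble := hasSum_genHarmonic_div_sq_tsum_doubleZetaTerm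
  have hrows : HasSum (fun m : ℕ ↦ genHarmonic 1 (m + 1) / ((m : ℝ) + 1) ^ 2)
      (2 * ∑' p, doubleZetaTerm p) := by
    rw [← tsum_tornheimTerm]
    exact summable_tornheimTerm.hasSum.prod_fiberwise hasSum_tornheimTerm_row
  have hsplit : HasSum (fun m : ℕ ↦ genHarmonic 1 (m + 1) / ((m : ℝ) + 1) ^ 2)
      (∑' p, doubleZetaTerm p + zetaThree) := by
    refine (hdouble.add hasSum_zetaThree).congr_fun fun m ↦ ?_
    rw [genHarmonic_one_succ]
    field_simp
  rwa [show ∑' p, doubleZetaTerm p = zetaThree by linarith [hrows.unique hsplit]] at hdouble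

/-! ### The weight -/

/-- The signed factorial quotient `(-1)ⁿ k! n!² / (2n + k + 1)!` common to both Wilf–Zeilberger
pairs. -/
noncomputable def wzWeight (n k : ℕ) : ℝ :=
  (-1) ^ n * k.factorial * (n.factorial : ℝ) ^ 2 / (2 * n + k + 1).factorial

lemma wzWeight_zero_left (k : ℕ) : wzWeight 0 k = 1 / ((k : ℝ) + 1) := by
  simp only [wzWeight, mul_zero, zero_add, Nat.factorial_succ]
  push_cast
  field_simp
  simp

lemma wzWeight_succ_right (n k : ℕ) :
    wzWeight n (k + 1) = wzWeight n k * ((k : ℝ) + 1) / (2 * n + k + 2) := by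
  rw [wzWeight, wzWeight, ← add_assoc, Nat.factorial_succ (2 * n + k + 1), Nat.factorial_succ k]
  push_cast
  field_simp
  ring

lemma wzWeight_succ_left (n k : ℕ) :
    wzWeight (n + 1) k =
      -(wzWeight n k * ((n : ℝ) + 1) ^ 2 / ((2 * n + k + 2) * (2 * n + k + 3))) := by
  rw [wzWeight, wzWeight, show 2 * (n + 1) + k + 1 = 2 * n + k + 1 + 1 + 1 by ring,
    Nat.factorial_succ (2 * n + k + 1 + 1), Nat.factorial_succ (2 * n + k + 1),
    Nat.factorial_succ n]
  push_cast
  field_simp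
  ring

lemma wzWeight_zero_right (n : ℕ) :
    wzWeight n 0 = 2 * (-1) ^ n / (((n : ℝ) + 1) * (n + 1).centralBinom) := by
  induction n with
  | zero => norm_num [wzWeight, Nat.centralBinom, Nat.choose]
  | succ n ih =>
    have hbinom : ((n : ℝ) + 1 + 1) * (n + 1 + 1).centralBinom =
        2 * (2 * (n + 1) + 1) * (n + 1).centralBinom := by
      exact_mod_cast Nat.succ_mul_centralBinom_succ (n + 1)
    have hne : ((n + 1).centralBinom : ℝ) ≠ 0 := by exact_mod_cast (n + 1).centralBinom_ne_zero
    rw [wzWeight_succ_left, ih]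
    push_cast
    rw [hbinom]
    field_simp
    ring

lemma abs_wzWeight_le (n k : ℕ) : |wzWeight n k| ≤ (1 / 4) ^ n / ((k : ℝ) + 1) := by
  induction n with
  | zero => rw [wzWeight_zero_left, pow_zero, abs_of_pos (by positivity)]
  | succ n ih =>
    have hratio : ((n : ℝ) + 1) ^ 2 / ((2 * n + k + 2) * (2 * n + k + 3)) ≤ 1 / 4 := by
      rw [div_le_div_iff₀ (by positivity) (by norm_num)]
      nlinarith [n.cast_nonneg (α := ℝ), k.cast_nonneg (α := ℝ)]
    calc |wzWeight (n + 1) k|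
        = |wzWeight n k| * (((n : ℝ) + 1) ^ 2 / ((2 * n + k + 2) * (2 * n + k + 3))) := by
          rw [wzWeight_succ_left, abs_neg, mul_div_assoc, abs_mul]
          congr 1
          exact abs_of_nonneg (by positivity)
      _ ≤ (1 / 4) ^ n / ((k : ℝ) + 1) * (1 / 4) := by gcongr
      _ = (1 / 4) ^ (n + 1) / ((k : ℝ) + 1) := by ring

lemma abs_wzWeight_mul_le (n k : ℕ) :
    |wzWeight n k| * (|genHarmonic 1 k - genHarmonic 1 n| + 1) ≤
      (1 / 2) ^ n * ((genHarmonic 1 k + 1) / ((k : ℝ) + 1)) := by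
  have hH := genHarmonic_nonneg 1 k
  have hpow : (n : ℝ) + 1 ≤ 2 ^ n := by exact_mod_cast n.lt_two_pow_self
  calc |wzWeight n k| * (|genHarmonic 1 k - genHarmonic 1 n| + 1)
      ≤ (1 / 4) ^ n / ((k : ℝ) + 1) * (genHarmonic 1 k + n + 1) := by
        gcongr
        exacts [abs_wzWeight_le n k, abs_genHarmonic_sub_le 1 n k]
    _ ≤ (1 / 4) ^ n / ((k : ℝ) + 1) * ((genHarmonic 1 k + 1) * 2 ^ n) := by
        gcongr
        nlinarith [n.cast_nonneg (α := ℝ)]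
    _ = (1 / 4 * 2) ^ n * ((genHarmonic 1 k + 1) / ((k : ℝ) + 1)) := by
        rw [mul_pow]
        ring
    _ = _ := by norm_num

lemma hasSum_wzWeight_mul_zero_right {φ ψ : ℕ → ℕ → ℝ} {s C : ℝ}
    (h : IsWZPair (fun n k ↦ wzWeight n k * φ n k) (fun n k ↦ wzWeight n k * ψ n k))
    (hφ : ∀ n k, |φ n k| ≤ C * (|genHarmonic 1 k - genHarmonic 1 n| + 1))
    (hψ : ∀ n k, |ψ n k| ≤ C * (|genHarmonic 1 k - genHarmonic 1 n| + 1))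
    (hs : HasSum (fun k ↦ wzWeight 0 k * φ 0 k) s) :
    HasSum (fun n ↦ wzWeight n 0 * ψ n 0) s := by
  have hC : 0 ≤ C := by simpa using (abs_nonneg _).trans (hφ 0 0)
  have hbound {n k : ℕ} {x : ℝ} (hx : |x| ≤ C * (|genHarmonic 1 k - genHarmonic 1 n| + 1)) :
      ‖wzWeight n k * x‖ ≤ (1 / 2) ^ n * (C * ((genHarmonic 1 k + 1) / ((k : ℝ) + 1))) := by
    calc |wzWeight n k * x|
        ≤ |wzWeight n k| * (C * (|genHarmonic 1 k - genHarmonic 1 n| + 1)) := by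
          rw [abs_mul]
          gcongr
      _ = C * (|wzWeight n k| * (|genHarmonic 1 k - genHarmonic 1 n| + 1)) := by ring
      _ ≤ C * ((1 / 2) ^ n * ((genHarmonic 1 k + 1) / ((k : ℝ) + 1))) :=
          mul_le_mul_of_nonneg_left (abs_wzWeight_mul_le n k) hC
      _ = _ := by ring
  exact h.hasSum_zero_right (fun n k ↦ hbound (hφ n k)) (fun n k ↦ hbound (hψ n k))
    summable_geometric_two (tendsto_self_mul_const_pow_of_lt_one (by norm_num) (by norm_num))
    (by simpa using tendsto_genHarmonic_one_add_one_div.const_mul C) hs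

/-! ### The pair for Apéry's series -/

/-- The first member of the Wilf–Zeilberger pair behind Apéry's series for `ζ(3)`. -/
noncomputable def aperyF (n k : ℕ) : ℝ :=
  wzWeight n k * (1 / ((n : ℝ) + k + 1) ^ 2)

/-- The companion of `aperyF`: its value at `k = 0` is the general term of Apéry's series. -/
noncomputable def aperyG (n k : ℕ) : ℝ :=
  wzWeight n k * (1 / ((n : ℝ) + k + 1) ^ 2 + 1 / ((2 * n + 2) * (2 * n + k + 2)))

lemma isWZPair_apery : IsWZPair aperyF aperyG := fun n k ↦ by
  simp only [aperyF, aperyG, wzWeight_succ_left, wzWeight_succ_right]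
  push_cast
  field_simp
  ring

lemma hasSum_aperyG_zero_right : HasSum (fun n ↦ aperyG n 0) zetaThree := by
  have hF (n k : ℕ) : 1 / ((n : ℝ) + k + 1) ^ 2 ≤ 1 :=
    div_le_self zero_le_one (one_le_pow₀ (le_add_of_nonneg_left (by positivity)))
  have hG (n k : ℕ) : 1 / ((2 * (n : ℝ) + 2) * (2 * n + k + 2)) ≤ 1 := by
    refine div_le_self zero_le_one (one_le_mul_of_one_le_of_one_le ?_ ?_) <;>
      exact one_le_two.trans (le_add_of_nonneg_left (by positivity))
  refine hasSum_wzWeight_mul_zero_right (C := 2) isWZPair_apery (fun n k ↦ ?_) (fun n k ↦ ?_)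
    (hasSum_zetaThree.congr_fun fun k ↦ ?_)
  · rw [abs_of_nonneg (by positivity)]
    linarith [hF n k, abs_nonneg (genHarmonic 1 k - genHarmonic 1 n)]
  · rw [abs_of_nonneg (by positivity)]
    linarith [hF n k, hG n k, abs_nonneg (genHarmonic 1 k - genHarmonic 1 n)]
  · rw [wzWeight_zero_left]
    push_cast
    field_simp
    ring

theorem hasSum_apery : HasSum (fun n : ℕ ↦
    5 / 2 * ((-1) ^ n / (((n : ℝ) + 1) ^ 3 * (n + 1).centralBinom))) zetaThree := by
  refine hasSum_aperyG_zero_right.congr_fun fun n ↦ ?_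
  rw [aperyG, wzWeight_zero_right]
  push_cast
  field_simp
  ring

/-! ### The pair for Euler's sum -/

/-- The first member of the Wilf–Zeilberger pair attached to Euler's sum `∑ Hₖ / (k + 1)²`. -/
noncomputable def eulerF (n k : ℕ) : ℝ :=
  wzWeight n k * ((genHarmonic 1 k - genHarmonic 1 n) / ((n : ℝ) + k + 1))

/-- The coefficient of `Hₖ - Hₙ` in the companion of `eulerF`; times the weight it is also the
Wilf–Zeilberger companion of `w(n, k) / (n + k + 1)`. -/
noncomputable def eulerCert (n k : ℕ) : ℝ :=
  ((n + 1) / (n + k + 1) + (6 * n + 2 * k + 5) / (2 * (2 * n + 1))) / (2 * n + k + 2)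

/-- The part of the companion of `eulerF` produced by the differences of the harmonic numbers. -/
noncomputable def eulerRem (n k : ℕ) : ℝ :=
  ((k + 1) / (2 * n + 1) ^ 2 + (6 * n + 5) / (4 * (2 * n + 1) * (n + 1))) / (2 * n + k + 2)

/-- The companion of `eulerF`. -/
noncomputable def eulerG (n k : ℕ) : ℝ :=
  wzWeight n k * ((genHarmonic 1 k - genHarmonic 1 n) * eulerCert n k + eulerRem n k)

lemma isWZPair_euler : IsWZPair eulerF eulerG := fun n k ↦ by
  simp only [eulerF, eulerG, eulerCert, eulerRem, wzWeight_succ_left, wzWeight_succ_right,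
    genHarmonic_one_succ]
  push_cast
  field_simp
  ring

lemma eulerCert_nonneg (n k : ℕ) : 0 ≤ eulerCert n k := by
  unfold eulerCert
  positivity

lemma eulerRem_nonneg (n k : ℕ) : 0 ≤ eulerRem n k := by
  unfold eulerRem
  positivity

lemma eulerCert_le_two (n k : ℕ) : eulerCert n k ≤ 2 := by
  have hn : (0 : ℝ) ≤ n := n.cast_nonneg
  have hk : (0 : ℝ) ≤ k := k.cast_nonneg
  have hfst : ((n : ℝ) + 1) / (n + k + 1) ≤ 1 := by
    rw [div_le_one (by positivity)]
    linarith
  have hsnd : (6 * (n : ℝ) + 2 * k + 5) / (2 * (2 * n + 1)) ≤ k + 3 := by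
    rw [div_le_iff₀ (by positivity)]
    nlinarith [mul_nonneg hn hk]
  rw [eulerCert, div_le_iff₀ (by positivity)]
  linarith

lemma eulerRem_le_two (n k : ℕ) : eulerRem n k ≤ 2 := by
  have hfst : ((k : ℝ) + 1) / (2 * n + 1) ^ 2 ≤ k + 1 :=
    div_le_self (by positivity) (one_le_pow₀ (le_add_of_nonneg_left (by positivity)))
  have hsnd : (6 * (n : ℝ) + 5) / (4 * (2 * n + 1) * (n + 1)) ≤ 2 := by
    rw [div_le_iff₀ (by positivity)]
    nlinarith [n.cast_nonneg (α := ℝ)]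
  rw [eulerRem, div_le_iff₀ (by positivity)]
  linarith [n.cast_nonneg (α := ℝ), k.cast_nonneg (α := ℝ)]

theorem hasSum_eulerG_zero_right : HasSum (fun n ↦ eulerG n 0) zetaThree := by
  refine hasSum_wzWeight_mul_zero_right (C := 2) isWZPair_euler (fun n k ↦ ?_) (fun n k ↦ ?_)
    (hasSum_genHarmonic_div_sq.congr_fun fun k ↦ ?_)
  · have hden : (1 : ℝ) ≤ n + k + 1 := le_add_of_nonneg_left (by positivity)
    rw [abs_div, abs_of_pos (zero_lt_one.trans_le hden)]
    refine (div_le_self (abs_nonneg _) hden).trans ?_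
    linarith [abs_nonneg (genHarmonic 1 k - genHarmonic 1 n)]
  · calc |(genHarmonic 1 k - genHarmonic 1 n) * eulerCert n k + eulerRem n k|
        ≤ |genHarmonic 1 k - genHarmonic 1 n| * eulerCert n k + eulerRem n k := by
          simpa only [abs_mul, abs_of_nonneg (eulerCert_nonneg n k),
            abs_of_nonneg (eulerRem_nonneg n k)] using
            abs_add_le ((genHarmonic 1 k - genHarmonic 1 n) * eulerCert n k) (eulerRem n k)
      _ ≤ |genHarmonic 1 k - genHarmonic 1 n| * 2 + 2 := by
          gcongr
          exacts [eulerCert_le_two n k, eulerRem_le_two n k]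
      _ = 2 * (|genHarmonic 1 k - genHarmonic 1 n| + 1) := by ring
  · rw [wzWeight_zero_left, genHarmonic_zero]
    push_cast
    field_simp
    ring

/-! ### The series for `ζ(3) / 5` -/

lemma risingFactorial_succ (a : ℝ) (n : ℕ) :
    risingFactorial a (n + 1) = risingFactorial a n * (a + n) :=
  prod_range_succ _ n

lemma risingFactorial_one (n : ℕ) : risingFactorial 1 n = n.factorial := by
  induction n with
  | zero => simp [risingFactorial]
  | succ n ih =>
    rw [risingFactorial_succ, ih, Nat.factorial_succ]
    push_cast
    ring

lemma risingFactorial_half (n : ℕ) :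
    risingFactorial (1 / 2) n = n.centralBinom * n.factorial / 4 ^ n := by
  induction n with
  | zero => simp [risingFactorial]
  | succ n ih =>
    have hbinom : ((n : ℝ) + 1) * (n + 1).centralBinom = 2 * (2 * n + 1) * n.centralBinom := by
      exact_mod_cast n.succ_mul_centralBinom_succ
    rw [risingFactorial_succ, ih, Nat.factorial_succ]
    push_cast
    rw [← mul_assoc, mul_comm ((n + 1).centralBinom : ℝ), hbinom]
    ring

lemma pow_mul_risingFactorial_div (n : ℕ) :
    (-1 / 4 : ℝ) ^ n * risingFactorial 1 n / risingFactorial (1 / 2) n =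
      (-1) ^ n / n.centralBinom := by
  have hne : (n.centralBinom : ℝ) ≠ 0 := by exact_mod_cast n.centralBinom_ne_zero
  rw [risingFactorial_one, risingFactorial_half, div_pow]
  field_simp

lemma summand_eq_eulerG_sub_apery (n : ℕ) :
    (-1 / 4 : ℝ) ^ (n + 1) * risingFactorial 1 (n + 1) /
        risingFactorial (1 / 2) (n + 1) *
        ((10 * ((n : ℝ) + 1) - 3) * genHarmonic 1 (n + 1) /
            (3 * ((n : ℝ) + 1) ^ 2 * (2 * ((n : ℝ) + 1) - 1)) -
          4 * (3 * ((n : ℝ) + 1) - 1) /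
            (3 * ((n : ℝ) + 1) ^ 2 * (2 * ((n : ℝ) + 1) - 1) ^ 2)) =
      2 / 3 * eulerG n 0 -
        7 / 15 * (5 / 2 * ((-1) ^ n / (((n : ℝ) + 1) ^ 3 * (n + 1).centralBinom))) := by
  rw [pow_mul_risingFactorial_div, eulerG, eulerCert, eulerRem, wzWeight_zero_right,
    genHarmonic_one_succ, genHarmonic_zero, show 2 * ((n : ℝ) + 1) - 1 = 2 * n + 1 by ring]
  push_cast
  field_simp
  ring

/-- `∑_{n≥1} (−1/4)^n (1)ₙ/(1/2)ₙ [ (10n−3)Hₙ/(3n²(2n−1)) − 4(3n−1)/(3n²(2n−1)²) ] = ζ(3)/5`. -/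
theorem harmonic_zeta3_fifth_series :
    ∑' n : ℕ, ((((-1 / 4 : ℝ) ^ (n + 1) * risingFactorial 1 (n + 1) /
        risingFactorial (1 / 2) (n + 1) *
        ((10 * ((n : ℝ) + 1) - 3) * genHarmonic 1 (n + 1) /
            (3 * ((n : ℝ) + 1) ^ 2 * (2 * ((n : ℝ) + 1) - 1)) -
          4 * (3 * ((n : ℝ) + 1) - 1) /
            (3 * ((n : ℝ) + 1) ^ 2 * (2 * ((n : ℝ) + 1) - 1) ^ 2)) : ℝ)) : ℂ)
      = riemannZeta 3 / 5 := by
  have hsum := (hasSum_eulerG_zero_right.mul_left (2 / 3)).sub (hasSum_apery.mul_left (7 / 15))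
  rw [← Complex.ofReal_tsum, (hsum.congr_fun summand_eq_eulerG_sub_apery).tsum_eq,
    riemannZeta_three]
  push_cast
  ring
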